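/- There exists an absolute constant C > 0 such that for every 0 < r < 1 and all multi-indices α, β ∈ ℤ₊³ with β ≤ α, α₃ ≥ 1 and β₃ = 0, one has binom(α,β) · r |α|^{−1} M_{r,α} / (M_{r,β} · M_{r,α−β+(0,0,1)}) ≤ C/(|β|+1)⁴ + C/(|α|−|β|+2)⁴. -/

import Mathlib

/-- `|α| = α₁ + α₂ + α₃` for a multi-index `α ∈ ℤ₊³`. -/
def msize (α : ℕ × ℕ × ℕ) : ℕ := α.1 + α.2.1 + α.2.2

/-- Componentwise order on multi-indices: `β ≤ α`. -/
def mle (β α : ℕ × ℕ × ℕ) : Prop := β.1 ≤ α.1 ∧ β.2.1 ≤ α.2.1 ∧ β.2.2 ≤ α.2.2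

/-- The multi-index binomial coefficient `binom(α,β) = Π binom(αᵢ,βᵢ)`. -/
def mbinom (α β : ℕ × ℕ × ℕ) : ℕ :=
  α.1.choose β.1 * α.2.1.choose β.2.1 * α.2.2.choose β.2.2

/-- `M_{r,α} = r^{|α|}(|α|+1)⁴/|α|!`. -/
noncomputable def Mcoef (r : ℝ) (α : ℕ × ℕ × ℕ) : ℝ :=
  r ^ msize α * ((msize α : ℝ) + 1) ^ 4 / (Nat.factorial (msize α) : ℝ)

theorem choose_mul_le_aux (a b c d : ℕ) :
    a.choose c * b.choose d ≤ (a + b).choose (c + d) := by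
  rw [Nat.add_choose_eq]
  exact Finset.single_le_sum (f := fun ij : ℕ × ℕ => a.choose ij.1 * b.choose ij.2)
    (fun _ _ => Nat.zero_le _) (a := (c, d)) (by simp)

theorem pow_aux (x y z : ℝ) (hx : 0 < x) (hy : 0 < y) (hz : 0 ≤ z) (h : z ≤ x + y) :
    2 * z ^ 4 / (x ^ 4 * y ^ 4) ≤ 16 / x ^ 4 + 16 / y ^ 4 := by
  have h1 : z ^ 4 ≤ (x + y) ^ 4 := pow_le_pow_left₀ hz h 4
  have h2 : (x + y) ^ 4 ≤ 8 * (x ^ 4 + y ^ 4) := by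
    have := add_pow_le hx.le hy.le 4
    norm_num at this
    exact this
  have e : 16 / x ^ 4 + 16 / y ^ 4 = (2 * (8 * (x ^ 4 + y ^ 4))) / (x ^ 4 * y ^ 4) := by
    field_simp
    ring
  rw [e]
  gcongr
  linarith

theorem main_aux (r : ℝ) (hr : 0 < r) (B k m : ℕ) (hm : 1 ≤ m)
    (hB : B * (k.factorial * m.factorial) ≤ (k + m).factorial) :
    (B : ℝ) * r * (((k + m : ℕ) : ℝ))⁻¹ *
      (r ^ (k + m) * (((k + m : ℕ) : ℝ) + 1) ^ 4 / ((k + m).factorial : ℝ)) /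
      ((r ^ k * ((k : ℝ) + 1) ^ 4 / (k.factorial : ℝ)) *
       (r ^ (m + 1) * (((m + 1 : ℕ) : ℝ) + 1) ^ 4 / ((m + 1).factorial : ℝ)))
    ≤ 16 / ((k : ℝ) + 1) ^ 4 + 16 / (((k + m : ℕ) : ℝ) - (k : ℝ) + 2) ^ 4 := by
  have hBr : (B : ℝ) * ((k.factorial : ℝ) * (m.factorial : ℝ)) ≤ ((k + m).factorial : ℝ) := by
    exact_mod_cast hB
  have hm' : (1 : ℝ) ≤ m := by exact_mod_cast hm
  have hk' : (0 : ℝ) ≤ k := Nat.cast_nonneg k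
  have e0 : ((k + m : ℕ) : ℝ) - (k : ℝ) + 2 = (m : ℝ) + 2 := by push_cast; ring
  rw [e0]
  refine le_trans ?_ (pow_aux ((k : ℝ) + 1) ((m : ℝ) + 2) ((k : ℝ) + m + 1)
    (by positivity) (by positivity) (by positivity) (by linarith))
  have hF : (0 : ℝ) < ((k + m).factorial : ℝ) := by exact_mod_cast Nat.factorial_pos _
  have hk : (0 : ℝ) < (k.factorial : ℝ) := by exact_mod_cast Nat.factorial_pos _
  have hmf : (0 : ℝ) < (m.factorial : ℝ) := by exact_mod_cast Nat.factorial_pos _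
  have hn : (0 : ℝ) < (k : ℝ) + m := by linarith
  rw [Nat.factorial_succ]
  generalize ((k + m).factorial : ℝ) = F at *
  push_cast
  generalize (k.factorial : ℝ) = K at *
  generalize (m.factorial : ℝ) = M at *
  have e1 : (B : ℝ) * r * ((k : ℝ) + m)⁻¹ * (r ^ (k + m) * ((k : ℝ) + m + 1) ^ 4 / F) /
      ((r ^ k * ((k : ℝ) + 1) ^ 4 / K) *
       (r ^ (m + 1) * ((m : ℝ) + 1 + 1) ^ 4 / (((m : ℝ) + 1) * M)))
      = ((B * (K * M)) / F * (((m : ℝ) + 1) / (k + m))) * ((k : ℝ) + m + 1) ^ 4 /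
        (((k : ℝ) + 1) ^ 4 * ((m : ℝ) + 2) ^ 4) := by
    have : (m : ℝ) + 1 + 1 = m + 2 := by ring
    rw [this, pow_add, pow_add]
    field_simp
  rw [e1]
  have h1 : (B * (K * M)) / F ≤ 1 := by rw [div_le_one hF]; exact hBr
  have h2 : ((m : ℝ) + 1) / (k + m) ≤ 2 := by rw [div_le_iff₀ hn]; linarith
  have h3 : (B * (K * M)) / F * (((m : ℝ) + 1) / (k + m)) ≤ 2 := by
    calc _ ≤ 1 * (2 : ℝ) := mul_le_mul h1 h2 (by positivity) (by norm_num)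
      _ = 2 := by norm_num
  gcongr

theorem statement15 :
    ∃ C : ℝ, 0 < C ∧
      ∀ r : ℝ, 0 < r → r < 1 →
        ∀ α β : ℕ × ℕ × ℕ, mle β α → 1 ≤ α.2.2 → β.2.2 = 0 →
          (mbinom α β : ℝ) * r * ((msize α : ℝ))⁻¹ * Mcoef r α /
              (Mcoef r β * Mcoef r (α.1 - β.1, α.2.1 - β.2.1, α.2.2 - β.2.2 + 1))
            ≤ C / ((msize β : ℝ) + 1) ^ 4
              + C / ((msize α : ℝ) - (msize β : ℝ) + 2) ^ 4 := by
  refine ⟨16, by norm_num, ?_⟩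
  rintro r hr - ⟨a1, a2, a3⟩ ⟨b1, b2, b3⟩ ⟨h1, h2, h3⟩ ha hb
  simp only at h1 h2 h3 ha hb
  subst hb
  obtain ⟨c1, rfl⟩ := Nat.exists_eq_add_of_le h1
  obtain ⟨c2, rfl⟩ := Nat.exists_eq_add_of_le h2
  have key := main_aux r hr (mbinom (b1 + c1, b2 + c2, a3) (b1, b2, 0)) (b1 + b2)
    (c1 + c2 + a3) (by omega) (by
      have q1 := choose_mul_le_aux (b1 + c1) (b2 + c2) b1 b2
      have q2 := choose_mul_le_aux (b1 + c1 + (b2 + c2)) a3 (b1 + b2) 0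
      have e : b1 + c1 + (b2 + c2) + a3 = b1 + b2 + (c1 + c2 + a3) := by omega
      rw [e] at q2
      have q3 := Nat.add_choose_mul_factorial_mul_factorial (b1 + b2) (c1 + c2 + a3)
      rw [← q3, mul_assoc]
      apply Nat.mul_le_mul_right
      simp only [mbinom, Nat.choose_zero_right, mul_one, add_zero] at *
      first
        | exact q1.trans q2
        | (rw [← Nat.choose_symm_add (a := b1 + b2)]; exact q1.trans q2))
  have e1 : msize (b1 + c1, b2 + c2, a3) = b1 + b2 + (c1 + c2 + a3) := by
    simp only [msize]; omega
  have e2 : msize (b1, b2, 0) = b1 + b2 := by simp only [msize]; omega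
  have e3 : msize (b1 + c1 - b1, b2 + c2 - b2, a3 - 0 + 1) = c1 + c2 + a3 + 1 := by
    simp only [msize]; omega
  simp only [Mcoef, e1, e2, e3]
  exact key
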